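/- arXiv:2305.19301 — 2 statements merged into one kernel-verified Lean document; each statement's English description precedes it below -/
import Mathlib

section
/- Let (Ω, F, P) and (Ω′, F′, P′) be probability spaces, k, m ∈ ℕ, and let (X, Y₁, …, Y_k) : Ω → ℝ^{1+k} and (X′, Y′₁, …, Y′_m) : Ω′ → ℝ^{1+m} be random vectors whose laws are centered Gaussian measures. Let L := E[X | σ(Y₁, …, Y_k)] and L′ := E[X′ | σ(Y′₁, …, Y′_m)] denote the conditional expectations. If E[X²] = E[X′²] and E[(X − L)²] = E[(X′ − L′)²], then the law of the pair (X, L) equals the law of the pair (X′, L′) as Borel probability measures on ℝ². Equivalently, for a centered jointly Gaussian source and any jointly Gaussian encoded representation, the joint law of the source together with its MMSE estimate is determined by the source variance and the value of the MMSE alone (in particular it does not depend on which representation achieving a given rate/MMSE is used). -/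
/-!
Let `ℓ` be the `L²` regression of `X` on the jointly Gaussian vector `Y`. The residual `X - ℓ(Y)`
is uncorrelated with `Y`, and joint Gaussianity upgrades this to independence, so
`L = E[X | σ(Y)]` is `ℓ(Y)` up to an additive constant. Hence `L` and `X - L` are independent
Gaussians. The variance of `X - L` is the MMSE, and by the law of total variance that of `L` is
`Var X` minus the MMSE, so the law of `(X, L)` depends only on the mean and variance of `X` and on
the MMSE.
-/

open MeasureTheory ProbabilityTheory

/-- A Borel probability measure on a real normed space is a centered Gaussian measure if
its pushforward under every continuous linear functional is a centered one-dimensional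
Gaussian distribution. -/
def IsCenteredGaussian {E : Type*} [NormedAddCommGroup E] [NormedSpace ℝ E]
    [MeasurableSpace E] (μ : Measure E) : Prop :=
  IsProbabilityMeasure μ ∧
    ∀ L : E →L[ℝ] ℝ, ∃ v : NNReal, μ.map L = gaussianReal 0 v

section LinearRegression

lemma exists_inner_sub_map_eq_zero {𝕜 V H : Type*} [RCLike 𝕜] [AddCommGroup V] [Module 𝕜 V]
    [NormedAddCommGroup H] [InnerProductSpace 𝕜 H] (T : V →ₗ[𝕜] H)
    [T.range.HasOrthogonalProjection] (x : H) :
    ∃ v, ∀ w, inner 𝕜 (x - T v) (T w) = 0 := by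
  obtain ⟨v, hv⟩ := T.range.starProjection_apply_mem x
  refine ⟨v, fun w ↦ ?_⟩
  rw [hv]
  exact (Submodule.mem_orthogonal' _ _).1 (T.range.sub_starProjection_mem_orthogonal x) _ ⟨w, rfl⟩

variable {Ω E : Type*} {mΩ : MeasurableSpace Ω} {P : Measure Ω}
  [NormedAddCommGroup E] [NormedSpace ℝ E] [FiniteDimensional ℝ E] {X : Ω → ℝ} {Y : Ω → E}

lemma exists_strongDual_integral_sub_mul_eq_zero (hX : MemLp X 2 P) (hY : MemLp Y 2 P) :
    ∃ ℓ : StrongDual ℝ E, ∀ M : StrongDual ℝ E, ∫ ω, (X ω - ℓ (Y ω)) * M (Y ω) ∂P = 0 := by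
  let T : StrongDual ℝ E →ₗ[ℝ] Lp ℝ 2 P :=
    { toFun M := M.compLp (hY.toLp Y)
      map_add' M N := M.add_compLp N _
      map_smul' c M := M.smul_compLp c _ }
  have hT (M : StrongDual ℝ E) : T M =ᵐ[P] fun ω ↦ M (Y ω) := by
    filter_upwards [M.coeFn_compLp (hY.toLp Y), hY.coeFn_toLp] with ω hM hω
    rw [← hω]
    exact hM
  obtain ⟨ℓ, hℓ⟩ := exists_inner_sub_map_eq_zero T (hX.toLp X)
  refine ⟨ℓ, fun M ↦ ?_⟩
  rw [← hℓ M, L2.inner_def]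
  refine integral_congr_ae ?_
  filter_upwards [Lp.coeFn_sub (hX.toLp X) (T ℓ), hX.coeFn_toLp, hT ℓ, hT M]
    with ω hsubω hXω hℓω hMω
  rw [hsubω, Pi.sub_apply, hXω, hℓω, hMω]
  simp only [RCLike.inner_apply, conj_trivial, mul_comm]

lemma exists_strongDual_covariance_sub_eq_zero [IsFiniteMeasure P]
    (hX : MemLp X 2 P) (hY : MemLp Y 2 P) :
    ∃ ℓ : StrongDual ℝ E, ∀ M : StrongDual ℝ E,
      cov[fun ω ↦ X ω - ℓ (Y ω), fun ω ↦ M (Y ω); P] = 0 := by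
  obtain ⟨ℓ, hℓ⟩ := exists_strongDual_integral_sub_mul_eq_zero
    (hX.sub (memLp_const P[X])) (hY.sub (memLp_const P[Y]))
  have hYint : Integrable Y P := hY.integrable one_le_two
  refine ⟨ℓ, fun M ↦ (integral_congr_ae (ae_of_all _ fun ω ↦ ?_)).trans (hℓ M)⟩
  have hM : ∫ ω, M (Y ω) ∂P = M P[Y] := M.integral_comp_comm hYint
  have hres : ∫ ω, (X ω - ℓ (Y ω)) ∂P = P[X] - ℓ P[Y] := by
    rw [integral_sub (hX.integrable one_le_two) (ℓ.integrable_comp hYint),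
      ℓ.integral_comp_comm hYint]
  simp only [hM, hres, Pi.sub_apply, map_sub]
  ring

end LinearRegression

section IndependentResidual

variable {Ω E F : Type*} {mΩ : MeasurableSpace Ω} {P : Measure Ω}
  [MeasurableSpace E] [NormedAddCommGroup F] [NormedSpace ℝ F] [CompleteSpace F]
  [MeasurableSpace F] [BorelSpace F] [SecondCountableTopology F] {Y : Ω → E}

lemma condExp_comap_ae_eq_integral_of_indepFun {W : Ω → F} (hW : AEMeasurable W P)
    (hY : Measurable Y) [SigmaFinite (P.trim hY.comap_le)] (hWY : IndepFun W Y P) :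
    P[W | MeasurableSpace.comap Y inferInstance] =ᵐ[P] fun _ ↦ P[W] := by
  obtain ⟨W', hW', hWW'⟩ := hW
  have hindep := (IndepFun_iff_Indep W' Y P).1 (hWY.congr hWW' Filter.EventuallyEq.rfl)
  rw [integral_congr_ae hWW']
  exact (condExp_congr_ae hWW').trans <| condExp_indep_eq hW'.comap_le hY.comap_le
    (comap_measurable W').stronglyMeasurable hindep

lemma condExp_comap_ae_eq_of_indepFun_sub {X : Ω → F} {f : E → F} (hX : Integrable X P)
    (hY : Measurable Y) [SigmaFinite (P.trim hY.comap_le)] (hf : Measurable f)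
    (hfY : Integrable (fun ω ↦ f (Y ω)) P) (hindep : IndepFun (fun ω ↦ X ω - f (Y ω)) Y P) :
    P[X | MeasurableSpace.comap Y inferInstance] =ᵐ[P]
      fun ω ↦ f (Y ω) + ∫ ω', (X ω' - f (Y ω')) ∂P := by
  have hfYcond : P[fun ω ↦ f (Y ω) | MeasurableSpace.comap Y inferInstance] = fun ω ↦ f (Y ω) :=
    condExp_of_stronglyMeasurable hY.comap_le
      (hf.comp (comap_measurable Y)).stronglyMeasurable hfY
  have hXcond := condExp_add hfY (hX.sub hfY) (MeasurableSpace.comap Y inferInstance)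
  rw [add_sub_cancel, hfYcond] at hXcond
  filter_upwards [hXcond,
    condExp_comap_ae_eq_integral_of_indepFun (hX.sub hfY).aemeasurable hY hindep] with ω hω hres
  rw [hω, Pi.add_apply, hres]
  rfl

end IndependentResidual

section MMSE

/-- The minimum mean-squared error of estimating `X` from the information `m`, attained by the
conditional expectation. -/
noncomputable def mmse {Ω : Type*} (m : MeasurableSpace Ω) {_ : MeasurableSpace Ω} (X : Ω → ℝ)
    (P : Measure Ω) : ℝ :=
  ∫ ω, (X ω - (P[X | m]) ω) ^ 2 ∂P

variable {Ω : Type*} {m mΩ : MeasurableSpace Ω} {P : Measure Ω} {X : Ω → ℝ}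

lemma mmse_add_variance_condExp [IsProbabilityMeasure P] (hm : m ≤ mΩ) (hX : MemLp X 2 P) :
    mmse m X P + Var[P[X | m]; P] = Var[X; P] := by
  rw [← integral_condVar_add_variance_condExp hm hX, condVar, integral_condExp hm]
  rfl

lemma integral_sub_condExp_eq_zero (hm : m ≤ mΩ) [SigmaFinite (P.trim hm)] (hX : Integrable X P) :
    ∫ ω, (X ω - (P[X | m]) ω) ∂P = 0 := by
  rw [integral_sub hX integrable_condExp, integral_condExp hm, sub_self]

lemma variance_sub_condExp_eq_mmse (hm : m ≤ mΩ) [SigmaFinite (P.trim hm)] (hX : Integrable X P) :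
    Var[fun ω ↦ X ω - (P[X | m]) ω; P] = mmse m X P :=
  variance_of_integral_eq_zero (hX.sub integrable_condExp).aemeasurable
    (integral_sub_condExp_eq_zero hm hX)

/-- The joint law of a Gaussian source with mean `a` and variance `v` and of its conditional
expectation given a jointly Gaussian representation with mean-squared error `d`: the estimate has
variance `v - d`, and the source adds to it an independent centered error of variance `d`. -/
noncomputable def gaussianEstimateLaw (a v d : ℝ) : Measure (ℝ × ℝ) :=
  ((gaussianReal a (v - d).toNNReal).prod (gaussianReal 0 d.toNNReal)).map
    fun p ↦ (p.1 + p.2, p.1)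

end MMSE

section GaussianEstimate

variable {Ω E : Type*} {mΩ : MeasurableSpace Ω} {P : Measure Ω}
  [NormedAddCommGroup E] [NormedSpace ℝ E] [FiniteDimensional ℝ E]
  [MeasurableSpace E] [BorelSpace E] {X : Ω → ℝ} {Y : Ω → E}

lemma exists_strongDual_indepFun_sub (hXY : HasGaussianLaw (fun ω ↦ (X ω, Y ω)) P) :
    ∃ ℓ : StrongDual ℝ E, IndepFun (fun ω ↦ X ω - ℓ (Y ω)) Y P := by
  have := hXY.isProbabilityMeasure
  obtain ⟨ℓ, hℓ⟩ := exists_strongDual_covariance_sub_eq_zero hXY.fst.memLp_two hXY.snd.memLp_two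
  have hres : HasGaussianLaw (fun ω ↦ (X ω - ℓ (Y ω), Y ω)) P :=
    hXY.map_fun ((ContinuousLinearMap.fst ℝ ℝ E - ℓ ∘L .snd ℝ ℝ E).prod (.snd ℝ ℝ E))
  refine ⟨ℓ, hres.indepFun_of_covariance_strongDual fun N M ↦ ?_⟩
  have hN : N ∘ (fun ω ↦ X ω - ℓ (Y ω)) = N 1 • fun ω ↦ X ω - ℓ (Y ω) := by
    ext ω
    simpa [mul_comm] using N.map_smul (X ω - ℓ (Y ω)) 1
  rw [hN, covariance_smul_left]
  exact mul_eq_zero_of_right _ (hℓ M)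

lemma exists_condExp_comap_ae_eq_affine (hXY : HasGaussianLaw (fun ω ↦ (X ω, Y ω)) P)
    (hY : Measurable Y) :
    ∃ (ℓ : StrongDual ℝ E) (c : ℝ), IndepFun (fun ω ↦ X ω - ℓ (Y ω)) Y P ∧
      P[X | MeasurableSpace.comap Y inferInstance] =ᵐ[P] fun ω ↦ ℓ (Y ω) + c := by
  have := hXY.isProbabilityMeasure
  obtain ⟨ℓ, hℓ⟩ := exists_strongDual_indepFun_sub hXY
  exact ⟨ℓ, _, hℓ, condExp_comap_ae_eq_of_indepFun_sub hXY.fst.integrable hY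
    ℓ.measurable (hXY.snd.map_fun ℓ).integrable hℓ⟩

lemma hasGaussianLaw_prodMk_condExp_comap (hXY : HasGaussianLaw (fun ω ↦ (X ω, Y ω)) P)
    (hY : Measurable Y) :
    HasGaussianLaw (fun ω ↦ (X ω, (P[X | MeasurableSpace.comap Y inferInstance]) ω)) P := by
  obtain ⟨ℓ, c, -, hL⟩ := exists_condExp_comap_ae_eq_affine hXY hY
  have hlin : HasGaussianLaw (fun ω ↦ (X ω, ℓ (Y ω))) P :=
    hXY.map_fun ((ContinuousLinearMap.fst ℝ ℝ E).prod (ℓ ∘L .snd ℝ ℝ E))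
  have haff : HasGaussianLaw (fun ω ↦ (X ω, ℓ (Y ω)) + (0, c)) P := by
    have := hlin.isGaussian_map
    refine ⟨?_⟩
    rw [← Function.comp_def (· + ((0 : ℝ), c)),
      ← AEMeasurable.map_map_of_aemeasurable (by fun_prop) hlin.aemeasurable]
    infer_instance
  refine haff.congr ?_
  filter_upwards [hL] with ω hω
  simp [hω]

lemma indepFun_condExp_comap_sub (hXY : HasGaussianLaw (fun ω ↦ (X ω, Y ω)) P)
    (hY : Measurable Y) :
    IndepFun (P[X | MeasurableSpace.comap Y inferInstance])
      (fun ω ↦ X ω - (P[X | MeasurableSpace.comap Y inferInstance]) ω) P := by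
  obtain ⟨ℓ, c, hindep, hL⟩ := exists_condExp_comap_ae_eq_affine hXY hY
  have haff : IndepFun (fun ω ↦ ℓ (Y ω) + c) (fun ω ↦ X ω - ℓ (Y ω) - c) P :=
    hindep.symm.comp (φ := fun y ↦ ℓ y + c) (ψ := fun r ↦ r - c) (by fun_prop) (by fun_prop)
  refine haff.congr hL.symm ?_
  filter_upwards [hL] with ω hω
  rw [hω, sub_add_eq_sub_sub]

theorem map_prodMk_condExp_comap_eq_gaussianEstimateLaw
    (hXY : HasGaussianLaw (fun ω ↦ (X ω, Y ω)) P) (hY : Measurable Y) :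
    P.map (fun ω ↦ (X ω, (P[X | MeasurableSpace.comap Y inferInstance]) ω)) =
      gaussianEstimateLaw P[X] Var[X; P] (mmse (MeasurableSpace.comap Y inferInstance) X P) := by
  have := hXY.isProbabilityMeasure
  set m := MeasurableSpace.comap Y inferInstance
  have hXL := hasGaussianLaw_prodMk_condExp_comap hXY hY
  have hX : Integrable X P := hXY.fst.integrable
  have hvar : Var[P[X | m]; P] = Var[X; P] - mmse m X P :=
    eq_sub_of_add_eq' (mmse_add_variance_condExp hY.comap_le hXY.fst.memLp_two)
  have hestimate : HasLaw (P[X | m]) (gaussianReal P[X] (Var[X; P] - mmse m X P).toNNReal) P :=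
    ⟨hXL.snd.aemeasurable, by
      rw [hXL.snd.map_eq_gaussianReal, integral_condExp hY.comap_le, hvar]⟩
  have herror : HasLaw (fun ω ↦ X ω - (P[X | m]) ω) (gaussianReal 0 (mmse m X P).toNNReal) P :=
    ⟨hXL.fun_sub.aemeasurable, by
      rw [hXL.fun_sub.map_eq_gaussianReal, integral_sub_condExp_eq_zero hY.comap_le hX,
        variance_sub_condExp_eq_mmse hY.comap_le hX]⟩
  have hjoint := (indepFun_condExp_comap_sub hXY hY).hasLaw_prod hestimate herror
  rw [gaussianEstimateLaw, ← hjoint.map_eq,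
    AEMeasurable.map_map_of_aemeasurable (by fun_prop) hjoint.aemeasurable]
  simp only [Function.comp_def, add_sub_cancel]

end GaussianEstimate

namespace IsCenteredGaussian

variable {E : Type*} [NormedAddCommGroup E] [NormedSpace ℝ E] [MeasurableSpace E]
  [OpensMeasurableSpace E] {μ : Measure E}

lemma isGaussian (hμ : IsCenteredGaussian μ) : IsGaussian μ :=
  isGaussian_of_map_eq_gaussianReal fun L ↦ ⟨0, hμ.2 L⟩

lemma integral_strongDual_eq_zero (hμ : IsCenteredGaussian μ) (L : StrongDual ℝ E) :
    ∫ x, L x ∂μ = 0 := by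
  obtain ⟨v, hv⟩ := hμ.2 L
  calc ∫ x, L x ∂μ = ∫ y, y ∂μ.map L := 
        (integral_map L.continuous.measurable.aemeasurable aestronglyMeasurable_id).symm
    _ = 0 := by rw [hv, integral_id_gaussianReal]

variable {Ω : Type*} {mΩ : MeasurableSpace Ω} {P : Measure Ω} {k : ℕ} {X : Ω → ℝ}
  {Y : Fin k → Ω → ℝ}

lemma hasGaussianLaw_prodMk (h : IsCenteredGaussian
      (P.map fun ω ↦ (Fin.cons (X ω) (fun i ↦ Y i ω) : Fin (k + 1) → ℝ))) :
    HasGaussianLaw (fun ω ↦ (X ω, fun i ↦ Y i ω)) P := by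
  have hcons : HasGaussianLaw (fun ω ↦ (Fin.cons (X ω) (fun i ↦ Y i ω) : Fin (k + 1) → ℝ)) P :=
    ⟨h.isGaussian⟩
  exact hcons.map_equiv_fun (Fin.consEquivL ℝ fun _ : Fin (k + 1) ↦ ℝ).symm

lemma integral_eq_zero (h : IsCenteredGaussian
      (P.map fun ω ↦ (Fin.cons (X ω) (fun i ↦ Y i ω) : Fin (k + 1) → ℝ))) :
    ∫ ω, X ω ∂P = 0 := by
  have := h.1
  rw [← h.integral_strongDual_eq_zero (ContinuousLinearMap.proj 0),
    integral_map (aemeasurable_of_map_neZero inferInstance) (by fun_prop)]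
  rfl

end IsCenteredGaussian

theorem statement15_general {Ω Ω' E E' : Type*} {mΩ : MeasurableSpace Ω}
    {mΩ' : MeasurableSpace Ω'} {P : Measure Ω} {P' : Measure Ω'}
    [NormedAddCommGroup E] [NormedSpace ℝ E] [FiniteDimensional ℝ E] [MeasurableSpace E]
    [BorelSpace E] [NormedAddCommGroup E'] [NormedSpace ℝ E'] [FiniteDimensional ℝ E']
    [MeasurableSpace E'] [BorelSpace E'] {X : Ω → ℝ} {Y : Ω → E} {X' : Ω' → ℝ} {Y' : Ω' → E'}
    (hY : Measurable Y) (hY' : Measurable Y')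
    (hXY : HasGaussianLaw (fun ω ↦ (X ω, Y ω)) P)
    (hXY' : HasGaussianLaw (fun ω ↦ (X' ω, Y' ω)) P')
    (hmean : ∫ ω, X ω ∂P = ∫ ω, X' ω ∂P') (hsq : ∫ ω, X ω ^ 2 ∂P = ∫ ω, X' ω ^ 2 ∂P')
    (hmmse : mmse (MeasurableSpace.comap Y inferInstance) X P =
      mmse (MeasurableSpace.comap Y' inferInstance) X' P') :
    P.map (fun ω ↦ (X ω, (P[X | MeasurableSpace.comap Y inferInstance]) ω)) =
      P'.map (fun ω ↦ (X' ω, (P'[X' | MeasurableSpace.comap Y' inferInstance]) ω)) := by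
  have := hXY.isProbabilityMeasure
  have := hXY'.isProbabilityMeasure
  have hvar : Var[X; P] = Var[X'; P'] := by
    rw [variance_eq_sub hXY.fst.memLp_two, variance_eq_sub hXY'.fst.memLp_two, hmean]
    exact congrArg (· - _) hsq
  rw [map_prodMk_condExp_comap_eq_gaussianEstimateLaw hXY hY,
    map_prodMk_condExp_comap_eq_gaussianEstimateLaw hXY' hY', hmean, hvar, hmmse]

/-- For centered jointly Gaussian sources, the joint law of the source together with its
MMSE estimate (conditional expectation given the encoded representation) is determined by
the source variance and the MMSE value alone: if `(X, Y₁, …, Y_k)` and `(X', Y'₁, …, Y'_m)`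
have centered Gaussian laws, `E[X²] = E[X'²]` and the mean squared errors of
`L = E[X | σ(Y₁,…,Y_k)]` and `L' = E[X' | σ(Y'₁,…,Y'_m)]` agree, then `(X, L)` and
`(X', L')` have the same law on `ℝ²`. -/
theorem statement15 {Ω Ω' : Type*} {F : MeasurableSpace Ω} {F' : MeasurableSpace Ω'}
    (P : Measure Ω) (P' : Measure Ω') [IsProbabilityMeasure P] [IsProbabilityMeasure P']
    (k m : ℕ) (X : Ω → ℝ) (Y : Fin k → Ω → ℝ) (X' : Ω' → ℝ) (Y' : Fin m → Ω' → ℝ)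
    (hX : Measurable X) (hY : ∀ i, Measurable (Y i))
    (hX' : Measurable X') (hY' : ∀ i, Measurable (Y' i))
    (hG : IsCenteredGaussian
      (P.map (fun ω => (Fin.cons (X ω) (fun i => Y i ω) : Fin (k + 1) → ℝ))))
    (hG' : IsCenteredGaussian
      (P'.map (fun ω => (Fin.cons (X' ω) (fun i => Y' i ω) : Fin (m + 1) → ℝ))))
    (hvar : ∫ ω, X ω ^ 2 ∂P = ∫ ω, X' ω ^ 2 ∂P')
    (hmmse :
      ∫ ω, (X ω - (P[X | ⨆ i, MeasurableSpace.comap (Y i) Real.measurableSpace]) ω) ^ 2 ∂P =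
      ∫ ω, (X' ω - (P'[X' | ⨆ i, MeasurableSpace.comap (Y' i) Real.measurableSpace]) ω) ^ 2
        ∂P') :
    P.map (fun ω =>
        (X ω, (P[X | ⨆ i, MeasurableSpace.comap (Y i) Real.measurableSpace]) ω)) =
      P'.map (fun ω =>
        (X' ω, (P'[X' | ⨆ i, MeasurableSpace.comap (Y' i) Real.measurableSpace]) ω)) := by
  simp only [← MeasurableSpace.comap_process_pi] at hmmse ⊢
  exact statement15_general (measurable_pi_lambda _ hY) (measurable_pi_lambda _ hY')
    hG.hasGaussianLaw_prodMk hG'.hasGaussianLaw_prodMk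
    (hG.integral_eq_zero.trans hG'.integral_eq_zero.symm) hvar hmmse
end

section
/- Let ρ ∈ [−1, 1], D ∈ [0, 1), and let (X₁, X₂, X₃, Y₁, Y₂, Y₃) : Ω → ℝ⁶ be a random vector on a probability space (Ω, F, P) whose law is a centered Gaussian measure, with E[X_i X_j] = ρ^{|i−j|} for all i, j ∈ {1,2,3}, E[Y_i Y_j] = (1 − D) ρ^{|i−j|} for all i, j ∈ {1,2,3}, and E[X_j Y_j] = 1 − D for j = 1, 2, 3. Define X̂_j := Y_j / √(1 − D). Then (a) the law of (X̂₁, X̂₂, X̂₃) equals the law of (X₁, X₂, X₃) (so the scaled reconstructions satisfy the zero joint-distribution perception constraint), and (b) E[(X_j − X̂_j)²] = 2 − 2√(1 − D) for each j = 1, 2, 3. Thus for the symmetric Gauss–Markov source, the MMSE representation achieving per-frame distortion D is transformed by a single scalar multiplication into a perfect-realism reconstruction with per-frame distortion 2 − 2√(1 − D). -/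
/-!
A centered Gaussian law is determined by its covariance. The covariance of `Y` is `1 - D` times
that of `X`, so dividing `Y` by `√(1 - D)` restores the covariance, and hence the law, of `X`.
Expanding the square, the distortion of `X̂_j = Y_j / √(1 - D)` is then
`E[X_j²] - 2 E[X_j Y_j] / √(1 - D) + E[Y_j²] / (1 - D) = (2 - 2 √(1 - D)) E[X_j²]`.
-/

open MeasureTheory ProbabilityTheory

section

variable {Ω Ω' : Type*} {mΩ : MeasurableSpace Ω} {mΩ' : MeasurableSpace Ω'}
  {P : Measure Ω} {Q : Measure Ω'}

theorem map_eq_map_of_hasGaussianLaw_of_covariance_eq {ι : Type*} [Finite ι]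
    {X : ι → Ω → ℝ} {Y : ι → Ω' → ℝ}
    (hX : HasGaussianLaw (fun ω i ↦ X i ω) P) (hY : HasGaussianLaw (fun ω i ↦ Y i ω) Q)
    (hmean : ∀ i, ∫ ω, X i ω ∂P = ∫ ω, Y i ω ∂Q)
    (hcov : ∀ i j, cov[X i, X j; P] = cov[Y i, Y j; Q]) :
    P.map (fun ω i ↦ X i ω) = Q.map (fun ω i ↦ Y i ω) := by
  classical
  cases nonempty_fintype ι
  have := hX.isProbabilityMeasure
  have := hY.isProbabilityMeasure
  refine Measure.ext_of_charFunDual (funext fun L ↦ ?_)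
  obtain ⟨c, L_eq⟩ : ∃ c : ι → ℝ, ∀ x, L x = ∑ i, x i * c i :=
    ⟨_, L.toLinearMap.pi_apply_eq_sum_univ⟩
  have mean_eq : ∫ ω, ∑ i, X i ω * c i ∂P = ∫ ω, ∑ i, Y i ω * c i ∂Q := by
    rw [integral_finsetSum _ fun i _ ↦ (hX.eval i).integrable.mul_const _,
      integral_finsetSum _ fun i _ ↦ (hY.eval i).integrable.mul_const _]
    simp only [integral_mul_const, hmean]
  have variance_eq : Var[fun ω ↦ ∑ i, X i ω * c i; P] = Var[fun ω ↦ ∑ i, Y i ω * c i; Q] := by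
    rw [variance_fun_sum fun i ↦ (hX.eval i).memLp_two.mul_const _,
      variance_fun_sum fun i ↦ (hY.eval i).memLp_two.mul_const _]
    simp only [covariance_mul_const_left, covariance_mul_const_right, hcov]
  simp only [hX.charFunDual_map_eq_fun, hY.charFunDual_map_eq_fun, L_eq, mean_eq, variance_eq]

namespace IsCenteredGaussian

section NormedSpace

variable {E F : Type*} [NormedAddCommGroup E] [NormedSpace ℝ E] [MeasurableSpace E]
  [NormedAddCommGroup F] [NormedSpace ℝ F] [MeasurableSpace F] {μ : Measure E}

lemma isGaussian_s16 [OpensMeasurableSpace E] (h : IsCenteredGaussian μ) : IsGaussian μ :=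
  isGaussian_of_map_eq_gaussianReal fun L ↦ ⟨0, h.2 L⟩

lemma hasGaussianLaw [OpensMeasurableSpace E] {X : Ω → E} (h : IsCenteredGaussian (P.map X)) :
    HasGaussianLaw X P :=
  ⟨h.isGaussian_s16⟩

lemma integral_strongDual [OpensMeasurableSpace E] (h : IsCenteredGaussian μ)
    (L : StrongDual ℝ E) : ∫ x, L x ∂μ = 0 := by
  obtain ⟨v, hv⟩ := h.2 L
  calc ∫ x, L x ∂μ = ∫ y, y ∂μ.map L :=
        (integral_map L.measurable.aemeasurable aestronglyMeasurable_id).symm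
    _ = 0 := by rw [hv, integral_id_gaussianReal]

lemma map [OpensMeasurableSpace E] [BorelSpace F] (h : IsCenteredGaussian μ) (L : E →L[ℝ] F) :
    IsCenteredGaussian (μ.map L) := by
  have := h.1
  refine ⟨Measure.isProbabilityMeasure_map (by fun_prop), fun L' ↦ ?_⟩
  rw [Measure.map_map (by fun_prop) (by fun_prop)]
  exact h.2 (L' ∘L L)

end NormedSpace

section RandomVector

variable {ι κ : Type*} [Fintype ι] [Fintype κ] {X : ι → Ω → ℝ}

lemma integral_eval (h : IsCenteredGaussian (P.map fun ω i ↦ X i ω)) (i : ι) :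
    ∫ ω, X i ω ∂P = 0 := by
  rw [← h.integral_strongDual (.proj i),
    integral_map h.hasGaussianLaw.aemeasurable (by fun_prop)]
  rfl

lemma covariance_eval (h : IsCenteredGaussian (P.map fun ω i ↦ X i ω)) (i j : ι) :
    cov[X i, X j; P] = ∫ ω, X i ω * X j ω ∂P := by
  have := h.hasGaussianLaw.isProbabilityMeasure
  rw [covariance_eq_sub (h.hasGaussianLaw.eval i).memLp_two (h.hasGaussianLaw.eval j).memLp_two,
    h.integral_eval i, zero_mul, sub_zero]
  rfl

lemma comp_index (h : IsCenteredGaussian (P.map fun ω i ↦ X i ω)) (f : κ → ι) :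
    IsCenteredGaussian (P.map fun ω k ↦ X (f k) ω) := by
  have h_map := h.map (ContinuousLinearMap.pi fun k ↦ .proj (f k) : (ι → ℝ) →L[ℝ] κ → ℝ)
  rwa [AEMeasurable.map_map_of_aemeasurable (by fun_prop) h.hasGaussianLaw.aemeasurable] at h_map

lemma of_append_left {m n : ℕ} {X : Fin m → Ω → ℝ} {Y : Fin n → Ω → ℝ}
    (h : IsCenteredGaussian (P.map fun ω ↦ Fin.append (X · ω) (Y · ω))) :
    IsCenteredGaussian (P.map fun ω i ↦ X i ω) := by
  simpa only [Fin.append_left] using h.comp_index (Fin.castAdd n)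

lemma of_append_right {m n : ℕ} {X : Fin m → Ω → ℝ} {Y : Fin n → Ω → ℝ}
    (h : IsCenteredGaussian (P.map fun ω ↦ Fin.append (X · ω) (Y · ω))) :
    IsCenteredGaussian (P.map fun ω i ↦ Y i ω) := by
  simpa only [Fin.append_right] using h.comp_index (Fin.natAdd m)

theorem map_div_sqrt_eq_map {X : ι → Ω → ℝ} {Y : ι → Ω' → ℝ} {a : ℝ} (ha : 0 < a)
    (hX : IsCenteredGaussian (P.map fun ω i ↦ X i ω))
    (hY : IsCenteredGaussian (Q.map fun ω i ↦ Y i ω))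
    (hYX : ∀ i j, ∫ ω, Y i ω * Y j ω ∂Q = a * ∫ ω, X i ω * X j ω ∂P) :
    Q.map (fun ω i ↦ Y i ω / √a) = P.map (fun ω i ↦ X i ω) := by
  have hYa : HasGaussianLaw (fun ω i ↦ Y i ω / √a) Q := by
    simpa only [Pi.smul_def, smul_eq_mul, inv_mul_eq_div] using hY.hasGaussianLaw.fun_smul (√a)⁻¹
  refine map_eq_map_of_hasGaussianLaw_of_covariance_eq hYa hX.hasGaussianLaw
    (fun i ↦ ?_) (fun i j ↦ ?_)
  · rw [integral_div, hY.integral_eval, hX.integral_eval, zero_div]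
  · rw [covariance_fun_div_left, covariance_fun_div_right, hY.covariance_eval, hX.covariance_eval,
      hYX, div_div, Real.mul_self_sqrt ha.le, mul_div_cancel_left₀ _ ha.ne']

end RandomVector

end IsCenteredGaussian

section Distortion

variable {U V : Ω → ℝ}

lemma integral_sub_div_sq (hU : MemLp U 2 P) (hV : MemLp V 2 P) (s : ℝ) :
    ∫ ω, (U ω - V ω / s) ^ 2 ∂P =
      ∫ ω, U ω ^ 2 ∂P - 2 / s * ∫ ω, U ω * V ω ∂P + (∫ ω, V ω ^ 2 ∂P) / s ^ 2 := by
  have hU2 : Integrable (fun ω ↦ U ω ^ 2) P := hU.integrable_sq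
  have hUV : Integrable (fun ω ↦ 2 / s * (U ω * V ω)) P := (hU.integrable_mul hV).const_mul _
  have hsub : Integrable (fun ω ↦ U ω ^ 2 - 2 / s * (U ω * V ω)) P := hU2.sub hUV
  calc ∫ ω, (U ω - V ω / s) ^ 2 ∂P
      = ∫ ω, U ω ^ 2 - 2 / s * (U ω * V ω) + V ω ^ 2 / s ^ 2 ∂P := by
        congr 1 with ω
        ring
    _ = _ := by
        rw [integral_add hsub (hV.integrable_sq.div_const _),
          integral_sub hU2 hUV, integral_const_mul, integral_div]

theorem integral_sub_div_sqrt_sq (hU : MemLp U 2 P) (hV : MemLp V 2 P) {a : ℝ} (ha : 0 < a)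
    (hUV : ∫ ω, U ω * V ω ∂P = a * ∫ ω, U ω ^ 2 ∂P)
    (hVV : ∫ ω, V ω ^ 2 ∂P = a * ∫ ω, U ω ^ 2 ∂P) :
    ∫ ω, (U ω - V ω / √a) ^ 2 ∂P = (2 - 2 * √a) * ∫ ω, U ω ^ 2 ∂P := by
  calc ∫ ω, (U ω - V ω / √a) ^ 2 ∂P
      = ∫ ω, U ω ^ 2 ∂P - 2 * (a / √a) * ∫ ω, U ω ^ 2 ∂P + a / a * ∫ ω, U ω ^ 2 ∂P := by
        rw [integral_sub_div_sq hU hV, hUV, hVV, Real.sq_sqrt ha.le]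
        ring
    _ = (2 - 2 * √a) * ∫ ω, U ω ^ 2 ∂P := by
        rw [Real.div_sqrt, div_self ha.ne']
        ring

end Distortion

theorem statement16_general {ι : Type*} [Fintype ι] {D : ℝ} (hD : D < 1) {X Y : ι → Ω → ℝ}
    (hX : IsCenteredGaussian (P.map fun ω i ↦ X i ω))
    (hY : IsCenteredGaussian (P.map fun ω i ↦ Y i ω))
    (hYY : ∀ i j, ∫ ω, Y i ω * Y j ω ∂P = (1 - D) * ∫ ω, X i ω * X j ω ∂P)
    (hXY : ∀ j, ∫ ω, X j ω * Y j ω ∂P = (1 - D) * ∫ ω, X j ω ^ 2 ∂P) :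
    P.map (fun ω j ↦ Y j ω / √(1 - D)) = P.map (fun ω j ↦ X j ω) ∧
      ∀ j, ∫ ω, (X j ω - Y j ω / √(1 - D)) ^ 2 ∂P =
        (2 - 2 * √(1 - D)) * ∫ ω, X j ω ^ 2 ∂P := by
  have h_pos : 0 < 1 - D := sub_pos.mpr hD
  refine ⟨hX.map_div_sqrt_eq_map h_pos hY hYY, fun j ↦ ?_⟩
  exact integral_sub_div_sqrt_sq (hX.hasGaussianLaw.eval j).memLp_two
    (hY.hasGaussianLaw.eval j).memLp_two h_pos (hXY j) (by simpa only [sq] using hYY j j)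

end

/-- Universality by a single scalar multiplication for the symmetric three-frame
Gauss–Markov source: if `(X₁, X₂, X₃, Y₁, Y₂, Y₃)` is centered jointly Gaussian with
`E[X_i X_j] = ρ^{|i−j|}`, `E[Y_i Y_j] = (1 − D)ρ^{|i−j|}` and `E[X_j Y_j] = 1 − D`
(so `Y` is the MMSE representation at per-frame distortion `D`), then
`X̂_j := Y_j / √(1 − D)` satisfies (a) `(X̂₁, X̂₂, X̂₃)` has the same law as
`(X₁, X₂, X₃)` (zero joint-distribution perception loss) and
(b) `E[(X_j − X̂_j)²] = 2 − 2√(1 − D)` for each `j`. -/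
theorem statement16 {Ω : Type*} {F : MeasurableSpace Ω} (P : Measure Ω)
    [IsProbabilityMeasure P] (ρ D : ℝ) (hρ : ρ ∈ Set.Icc (-1 : ℝ) 1)
    (hD : D ∈ Set.Ico (0 : ℝ) 1)
    (X Y : Fin 3 → Ω → ℝ)
    (hXm : ∀ i, Measurable (X i)) (hYm : ∀ i, Measurable (Y i))
    (hG : IsCenteredGaussian
      (P.map (fun ω => (Fin.append (fun i => X i ω) (fun i => Y i ω) : Fin (3 + 3) → ℝ))))
    (hXX : ∀ i j : Fin 3, ∫ ω, X i ω * X j ω ∂P = ρ ^ (((i : ℕ) : ℤ) - ((j : ℕ) : ℤ)).natAbs)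
    (hYY : ∀ i j : Fin 3, ∫ ω, Y i ω * Y j ω ∂P =
      (1 - D) * ρ ^ (((i : ℕ) : ℤ) - ((j : ℕ) : ℤ)).natAbs)
    (hXY : ∀ j : Fin 3, ∫ ω, X j ω * Y j ω ∂P = 1 - D) :
    (P.map (fun ω => fun j : Fin 3 => Y j ω / Real.sqrt (1 - D)) =
      P.map (fun ω => fun j : Fin 3 => X j ω)) ∧
    ∀ j : Fin 3, ∫ ω, (X j ω - Y j ω / Real.sqrt (1 - D)) ^ 2 ∂P
      = 2 - 2 * Real.sqrt (1 - D) := by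
  have unit_variance (j : Fin 3) : ∫ ω, X j ω ^ 2 ∂P = 1 := by simpa [sq] using hXX j j
  simpa [unit_variance] using statement16_general hD.2 hG.of_append_left hG.of_append_right
    (by simpa only [hXX] using hYY) (by simpa only [unit_variance, mul_one] using hXY)
end
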